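/- arXiv:2105.12345 — 2 statements merged into one kernel-verified Lean document; each statement's English description precedes it below -/
import Mathlib

section
/- Let p be a prime number and let Y be a nontrivial additive subgroup of ℚ such that p·Y = Y and q·Y ≠ Y for every prime q ≠ p. Let n ≥ 2 and let r_1, …, r_n be nonzero rational numbers such that r_j·Y = Y for each j and r_1² + ⋯ + r_n² = 1. Let f : Y → ℂ be a positive definite function with f(0) = 1 satisfying f(y) = ∏_{j=1}^n f(r_j y) for all y ∈ Y, and suppose in addition that f(y) ≠ 0 for all y ∈ Y. Then there exist a real number σ ≥ 0 and a character χ of Y such that f(y) = χ(y)·exp(−σ y²) for all y ∈ Y. -/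
open scoped BigOperators

/-- A function `f : G → ℂ` on an additive abelian group is positive definite if every
quadratic form `∑ cᵢ c̄ⱼ f(yᵢ - yⱼ)` is a nonnegative real number. -/
def IsPositiveDefinite {G : Type*} [AddCommGroup G] (f : G → ℂ) : Prop :=
  ∀ (n : ℕ) (y : Fin n → G) (c : Fin n → ℂ),
    ∃ t : ℝ, 0 ≤ t ∧ ∑ i, ∑ j, c i * (starRingEnd ℂ) (c j) * f (y i - y j) = (t : ℂ)

/-- The image of a subgroup of `ℚ` under multiplication by a rational number. -/
def ratSMul (r : ℚ) (Y : AddSubgroup ℚ) : Set ℚ := (fun y => r * y) '' (Y : Set ℚ)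

/-!
The arithmetic of `Y` forces `rⱼ = ± p ^ (-mⱼ)` with `mⱼ > 0`, so with `s = p⁻²` we have
`∑ j, s ^ mⱼ = 1`. Iterating the functional equation then averages over the orbit `p⁻ᵏ x`: any
`g ≥ 0` with `g k ≤ ∑ j, g (k + mⱼ)` and `g k = o(sᵏ)` vanishes, and if `g k / sᵏ` converges to `L`
and equality holds, then `g k = L sᵏ`.

Positive definiteness makes `f` the Gram kernel of unit vectors in a Hilbert space. The triangle
inequality there makes `√(1 - |f|)` subadditive, so `(1 - |f (p⁻ᵏ x)|) / sᵏ` is monotone in `k`;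
averaging identifies its limit as `-log |f x|`. Hence `√(-log |f|)` is subadditive and scales by `p`
under multiplication by `p`, hence by `n` under multiplication by any integer `n`, so that
`-log |f|` is a multiple of `y ^ 2`. The Cauchy-Schwarz inequality bounds the failure of
multiplicativity of `f / |f|` at `(p⁻ᵏ x, p⁻ᵏ y)` by `O(p⁻³ᵏ) = o(sᵏ)`, so the same averaging shows
that `f / |f|` is a character.
-/

open Filter Topology
open scoped ComplexConjugate InnerProductSpace

universe u

section Circle

/-- The phase `z / |z|` of a complex number, as a point of the unit circle; it is `1` at `z = 0`. -/
noncomputable def phase (z : ℂ) : Circle := Circle.exp z.arg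

lemma norm_mul_phase (z : ℂ) : (‖z‖ : ℂ) * phase z = z :=
  Complex.norm_mul_exp_arg_mul_I z

lemma coe_phase {z : ℂ} (hz : z ≠ 0) : (phase z : ℂ) = z / ‖z‖ :=
  eq_div_of_mul_eq (by simpa using hz) (by rw [mul_comm, norm_mul_phase])

lemma phase_one : phase 1 = 1 := by simp [phase]

lemma phase_conj (z : ℂ) : phase (conj z) = (phase z)⁻¹ := by
  rcases eq_or_ne z 0 with rfl | hz
  · simp [phase]
  · ext
    rw [Circle.coe_inv_eq_conj, coe_phase hz, coe_phase (by simpa using hz)]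
    simp

lemma phase_prod {ι : Type*} (s : Finset ι) {z : ι → ℂ} (hz : ∀ i ∈ s, z i ≠ 0) :
    phase (∏ i ∈ s, z i) = ∏ i ∈ s, phase (z i) := by
  ext
  calc (phase (∏ i ∈ s, z i) : ℂ) = ∏ i ∈ s, z i / ‖z i‖ := by
        rw [coe_phase (Finset.prod_ne_zero_iff.2 hz), norm_prod, Complex.ofReal_prod,
          Finset.prod_div_distrib]
    _ = ∏ i ∈ s, (phase (z i) : ℂ) := Finset.prod_congr rfl fun i hi => (coe_phase (hz i hi)).symm
    _ = (∏ i ∈ s, phase (z i) : Circle) :=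
        (map_prod Circle.coeHom (fun i => phase (z i)) s).symm

lemma norm_circle_prod_sub_one_le {ι : Type*} (s : Finset ι) (z : ι → Circle) :
    ‖((∏ i ∈ s, z i : Circle) : ℂ) - 1‖ ≤ ∑ i ∈ s, ‖(z i : ℂ) - 1‖ := by
  classical
  induction s using Finset.induction_on with
  | empty => simp
  | insert a s ha ih =>
    rw [Finset.prod_insert ha, Finset.sum_insert ha, Circle.coe_mul]
    calc ‖(z a : ℂ) * (∏ i ∈ s, z i : Circle) - 1‖
        = ‖((z a : ℂ) - 1) + z a * ((∏ i ∈ s, z i : Circle) - 1)‖ := by congr 1; ring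
      _ ≤ ‖(z a : ℂ) - 1‖ + ‖((∏ i ∈ s, z i : Circle) : ℂ) - 1‖ :=
        (norm_add_le _ _).trans_eq (by rw [norm_mul, Circle.norm_coe, one_mul])
      _ ≤ ‖(z a : ℂ) - 1‖ + ∑ i ∈ s, ‖(z i : ℂ) - 1‖ := by gcongr

lemma norm_circle_inv_sub_one (z : Circle) : ‖((z⁻¹ : Circle) : ℂ) - 1‖ = ‖(z : ℂ) - 1‖ := by
  rw [Circle.coe_inv_eq_conj, ← RCLike.norm_conj, map_sub, Complex.conj_conj, map_one]

lemma norm_circle_sub_one_le_two_mul_abs_im (z : Circle) (hz : 0 ≤ (z : ℂ).re) :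
    ‖(z : ℂ) - 1‖ ≤ 2 * |(z : ℂ).im| := by
  have hunit : (z : ℂ).re * (z : ℂ).re + (z : ℂ).im * (z : ℂ).im = 1 := by
    rw [← Complex.normSq_apply, Circle.normSq_coe]
  refine (sq_le_sq₀ (norm_nonneg _) (by positivity)).1 ?_
  rw [Complex.sq_norm, Complex.normSq_apply, mul_pow, sq_abs]
  simp only [Complex.sub_re, Complex.one_re, Complex.sub_im, Complex.one_im]
  nlinarith

end Circle

section InnerProduct

variable {H : Type*} [NormedAddCommGroup H] [InnerProductSpace ℂ H]

lemma norm_sub_eq_sqrt_two_mul_sqrt {a b : H} (ha : ‖a‖ = 1) (hb : ‖b‖ = 1) :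
    ‖a - b‖ = √2 * √(1 - (⟪a, b⟫_ℂ).re) := by
  rw [← Real.sqrt_mul zero_le_two, ← Real.sqrt_sq (norm_nonneg (a - b)), @norm_sub_sq ℂ, ha, hb,
    RCLike.re_eq_complex_re]
  congr 1
  ring

lemma norm_sub_midpoint_sq {o a a' : H} (ho : ‖o‖ = 1) (ha : ‖a‖ = 1) (ha' : ‖a'‖ = 1) :
    ‖o - (2⁻¹ : ℂ) • (a + a')‖ ^ 2 =
      3 / 2 + (⟪a, a'⟫_ℂ).re / 2 - (⟪o, a⟫_ℂ).re - (⟪o, a'⟫_ℂ).re := by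
  have hre : (⟪o, (2⁻¹ : ℂ) • (a + a')⟫_ℂ).re = ((⟪o, a⟫_ℂ).re + (⟪o, a'⟫_ℂ).re) / 2 := by
    rw [inner_smul_right, inner_add_right, ← Complex.ofReal_ofNat, ← Complex.ofReal_inv,
      Complex.re_ofReal_mul, Complex.add_re]
    ring
  rw [@norm_sub_sq ℂ, norm_smul, mul_pow, @norm_add_sq ℂ, ho, ha, ha', RCLike.re_eq_complex_re,
    hre, norm_inv, Complex.norm_ofNat]
  ring

/- With `a = exp(iA)`, `a' = exp(-iA)`, `b = exp(iB)`, `b' = exp(-iB)` and `o = 1` as random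
variables, this is the identity `sin(A+B) = sin A + sin B - (1 - cos A) sin B - (1 - cos B) sin A`
followed by the Cauchy-Schwarz inequality. -/
lemma two_mul_abs_im_inner_le {o a a' b b' : H} (hoa : ⟪o, a⟫_ℂ = ⟪o, a'⟫_ℂ)
    (hob : ⟪o, b⟫_ℂ = ⟪o, b'⟫_ℂ) (hab : conj ⟪a, b⟫_ℂ = ⟪a', b'⟫_ℂ)
    (hab' : conj ⟪a', b⟫_ℂ = ⟪a, b'⟫_ℂ) :
    2 * |(⟪a', b⟫_ℂ).im| ≤ ‖o - (2⁻¹ : ℂ) • (a + a')‖ * ‖b - b'‖ +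
      ‖o - (2⁻¹ : ℂ) • (b + b')‖ * ‖a - a'‖ := by
  have hba : ⟪b, a⟫_ℂ = conj ⟪a, b⟫_ℂ := (inner_conj_symm _ _).symm
  have hba' : ⟪b, a'⟫_ℂ = conj ⟪a', b⟫_ℂ := (inner_conj_symm _ _).symm
  have hb'a : ⟪b', a⟫_ℂ = ⟪a', b⟫_ℂ := by rw [← inner_conj_symm, ← hab', Complex.conj_conj]
  have hb'a' : ⟪b', a'⟫_ℂ = ⟪a, b⟫_ℂ := by rw [← inner_conj_symm, ← hab, Complex.conj_conj]
  have hsum : ⟪o - (2⁻¹ : ℂ) • (a + a'), b - b'⟫_ℂ + ⟪o - (2⁻¹ : ℂ) • (b + b'), a - a'⟫_ℂ =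
      conj ⟪a', b⟫_ℂ - ⟪a', b⟫_ℂ := by
    simp only [inner_sub_left, inner_sub_right, inner_add_left, inner_smul_left, hoa, hob,
      hba, hba', hb'a, hb'a', ← hab, ← hab', map_inv₀, map_ofNat]
    ring
  calc 2 * |(⟪a', b⟫_ℂ).im| = ‖conj ⟪a', b⟫_ℂ - ⟪a', b⟫_ℂ‖ := by
        rw [← norm_neg, neg_sub, Complex.sub_conj]
        simp
    _ ≤ _ := by
        rw [← hsum]
        exact (norm_add_le _ _).trans (add_le_add (norm_inner_le_norm _ _) (norm_inner_le_norm _ _))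

end InnerProduct

/-- The kernel `(x, y) ↦ f (y - x)` on `G`, with the complex numbers encoded as operators on `ℂ` as
required by `RKHS.OfKernel`. -/
noncomputable def translationKernel {G : Type*} [AddCommGroup G] (f : G → ℂ) :
    Matrix G G (ℂ →L[ℂ] ℂ) :=
  Matrix.of fun x y => f (y - x) • ContinuousLinearMap.id ℂ ℂ

/-- The failure of multiplicativity of the phase of `f`; it is trivial exactly when the phase of `f`
is a character. -/
noncomputable def phaseDefect {G : Type*} [AddCommGroup G] (f : G → ℂ) (x y : G) : Circle :=
  phase (f (x + y)) / (phase (f x) * phase (f y))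

namespace IsPositiveDefinite

variable {G : Type u} [AddCommGroup G] {f : G → ℂ}

lemma map_neg (hf : IsPositiveDefinite f) (x : G) : f (-x) = conj (f x) := by
  obtain ⟨t₀, -, h₀⟩ := hf 1 ![0] ![1]
  obtain ⟨t₁, -, h₁⟩ := hf 2 ![x, 0] ![1, 1]
  obtain ⟨t₂, -, h₂⟩ := hf 2 ![x, 0] ![1, Complex.I]
  have him₀ : (f 0).im = 0 := by simpa using congrArg Complex.im h₀
  have him : (f 0).im + (f x).im + ((f (-x)).im + (f 0).im) = 0 := by
    simpa [Fin.sum_univ_two] using congrArg Complex.im h₁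
  have hre : (f 0).im + -(f x).re + ((f (-x)).re + (f 0).im) = 0 := by
    simpa [Fin.sum_univ_two] using congrArg Complex.im h₂
  apply Complex.ext
  · rw [Complex.conj_re]; linarith
  · rw [Complex.conj_im]; linarith

lemma norm_map_neg (hf : IsPositiveDefinite f) (x : G) : ‖f (-x)‖ = ‖f x‖ := by
  rw [hf.map_neg, RCLike.norm_conj]

lemma norm_units_smul (hf : IsPositiveDefinite f) (η : ℤˣ) (x : G) : ‖f (η • x)‖ = ‖f x‖ := by
  rcases Int.units_eq_one_or η with rfl | rfl
  · rw [one_smul]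
  · rw [Units.neg_smul, one_smul, hf.norm_map_neg]

lemma posSemidef_translationKernel (hf : IsPositiveDefinite f) :
    (translationKernel f).PosSemidef := by
  refine ((RKHS.posSemidef_tfae (K := translationKernel f)).out 0 2 rfl rfl).2
    ⟨?_, fun v => ?_⟩
  · ext x y
    simp [translationKernel, ContinuousLinearMap.adjoint_id,
      ContinuousLinearMap.star_eq_adjoint, ← hf.map_neg]
  · let e := v.support.equivFin.symm
    obtain ⟨t, ht, h⟩ := hf v.support.card (fun i => (e i : G)) (fun i => v (e i))
    suffices hsum : (v.sum fun x a => v.sum fun y b => ⟪translationKernel f y x a, b⟫_ℂ) = t by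
      simpa [Finsupp.sum] using (congrArg Complex.re hsum).ge.trans' (by simpa using ht)
    rw [← h, Finset.sum_comm]
    simp only [Finsupp.sum]
    rw [← Finset.sum_coe_sort, ← Equiv.sum_comp e]
    refine Finset.sum_congr rfl fun i _ => ?_
    rw [← Finset.sum_coe_sort, ← Equiv.sum_comp e]
    refine Finset.sum_congr rfl fun j _ => ?_
    simp only [translationKernel, Matrix.of_apply, smul_apply, ContinuousLinearMap.id_apply,
      smul_eq_mul, RCLike.inner_apply, map_mul, ← hf.map_neg, neg_sub]
    ring

lemma exists_inner_eq (hf : IsPositiveDefinite f) :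
    ∃ (H : Type u) (_ : NormedAddCommGroup H) (_ : InnerProductSpace ℂ H) (e : G → H),
      ∀ x y, ⟪e x, e y⟫_ℂ = f (y - x) := by
  have := Fact.mk hf.posSemidef_translationKernel
  refine ⟨RKHS.OfKernel (translationKernel f), inferInstance, inferInstance,
    fun x => RKHS.kerFun _ x 1, fun x y => ?_⟩
  rw [← RKHS.kernel_inner, RKHS.OfKernel.kernel_ofKernel]
  simp [translationKernel, ← hf.map_neg]

lemma phaseDefect_neg_neg (hf : IsPositiveDefinite f) (x y : G) :
    phaseDefect f (-x) (-y) = (phaseDefect f x y)⁻¹ := by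
  simp only [phaseDefect, ← neg_add, hf.map_neg, phase_conj, div_eq_mul_inv, mul_inv, inv_inv]

lemma norm_phaseDefect_units_smul_sub_one (hf : IsPositiveDefinite f) (η : ℤˣ) (x y : G) :
    ‖(phaseDefect f (η • x) (η • y) : ℂ) - 1‖ = ‖(phaseDefect f x y : ℂ) - 1‖ := by
  rcases Int.units_eq_one_or η with rfl | rfl
  · simp only [one_smul]
  · simp only [Units.neg_smul, one_smul, hf.phaseDefect_neg_neg,
      norm_circle_inv_sub_one]

lemma exists_inner_eq_norm_mul_phaseDefect (hf : IsPositiveDefinite f) (h0 : f 0 = 1) :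
    ∃ (H : Type u) (_ : NormedAddCommGroup H) (_ : InnerProductSpace ℂ H) (v : G → H),
      (∀ x, ‖v x‖ = 1) ∧ (∀ x, ⟪v 0, v x⟫_ℂ = ‖f x‖) ∧
        ∀ x y, ⟪v (-x), v y⟫_ℂ = ‖f (x + y)‖ * phaseDefect f x y := by
  obtain ⟨H, _, _, e, he⟩ := hf.exists_inner_eq
  let v (x : G) : H := ((phase (f x))⁻¹ : Circle) • e x
  have hv (x y : G) : ⟪v x, v y⟫_ℂ =
      ‖f (y - x)‖ * (phase (f x) * (phase (f y))⁻¹ * phase (f (y - x)) : Circle) := by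
    calc ⟪v x, v y⟫_ℂ = phase (f x) * (phase (f y) : ℂ)⁻¹ * f (y - x) := by
          simp only [v]
          rw [Circle.smul_def, Circle.smul_def, inner_smul_left, inner_smul_right, he,
            ← Circle.coe_inv_eq_conj, inv_inv, Circle.coe_inv]
          ring
      _ = phase (f x) * (phase (f y) : ℂ)⁻¹ * (‖f (y - x)‖ * phase (f (y - x))) := by
          rw [norm_mul_phase]
      _ = _ := by
          push_cast
          ring
  refine ⟨H, inferInstance, inferInstance, v, fun x => ?_, fun x => ?_, fun x y => ?_⟩
  · rw [norm_eq_sqrt_re_inner (𝕜 := ℂ), hv]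
    simp [h0, phase_one]
  · rw [hv, h0, sub_zero, phase_one, one_mul, inv_mul_cancel, Circle.coe_one, mul_one]
  · rw [hv, sub_neg_eq_add, add_comm y x, hf.map_neg, phase_conj, phaseDefect,
      div_eq_inv_mul, mul_inv]

lemma norm_le_one (hf : IsPositiveDefinite f) (h0 : f 0 = 1) (x : G) : ‖f x‖ ≤ 1 := by
  obtain ⟨H, _, _, v, hv, hv0, -⟩ := hf.exists_inner_eq_norm_mul_phaseDefect h0
  simpa [hv, hv0] using norm_inner_le_norm (𝕜 := ℂ) (v 0) (v x)

lemma sqrt_one_sub_re_le (hf : IsPositiveDefinite f) (h0 : f 0 = 1) (x y : G) :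
    √(1 - ‖f (x + y)‖ * (phaseDefect f x y : ℂ).re) ≤ √(1 - ‖f x‖) + √(1 - ‖f y‖) := by
  obtain ⟨H, _, _, v, hv, hv0, hvd⟩ := hf.exists_inner_eq_norm_mul_phaseDefect h0
  have htri := norm_sub_le_norm_sub_add_norm_sub (v (-x)) (v 0) (v y)
  rw [norm_sub_rev (v (-x)) (v 0)] at htri
  simp only [norm_sub_eq_sqrt_two_mul_sqrt (hv _) (hv _), hv0, hvd, hf.norm_map_neg,
    Complex.re_ofReal_mul, Complex.ofReal_re, ← mul_add] at htri
  exact le_of_mul_le_mul_left htri (by positivity)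

lemma sqrt_one_sub_norm_add_le (hf : IsPositiveDefinite f) (h0 : f 0 = 1) (x y : G) :
    √(1 - ‖f (x + y)‖) ≤ √(1 - ‖f x‖) + √(1 - ‖f y‖) := by
  refine (Real.sqrt_le_sqrt (sub_le_sub_left ?_ 1)).trans (hf.sqrt_one_sub_re_le h0 x y)
  exact mul_le_of_le_one_right (norm_nonneg _)
    ((Complex.re_le_norm _).trans_eq (Circle.norm_coe _))

lemma norm_mul_abs_im_phaseDefect_le (hf : IsPositiveDefinite f) (h0 : f 0 = 1) (x y : G) :
    ‖f (x + y)‖ * |(phaseDefect f x y : ℂ).im| ≤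
      √2 * (√(3 / 2 + ‖f (x + x)‖ / 2 - 2 * ‖f x‖) * √(1 - ‖f y‖) +
        √(3 / 2 + ‖f (y + y)‖ / 2 - 2 * ‖f y‖) * √(1 - ‖f x‖)) := by
  obtain ⟨H, _, _, v, hv, hv0, hvd⟩ := hf.exists_inner_eq_norm_mul_phaseDefect h0
  have hv0_neg (x : G) : ⟪v 0, v (-x)⟫_ℂ = ⟪v 0, v x⟫_ℂ := by rw [hv0, hv0, hf.norm_map_neg]
  have hconj (x y : G) : conj ⟪v (-x), v y⟫_ℂ = ⟪v x, v (-y)⟫_ℂ := by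
    have h := hvd (-x) (-y)
    rw [neg_neg, hf.phaseDefect_neg_neg, ← neg_add, hf.norm_map_neg] at h
    rw [h, hvd, map_mul, Complex.conj_ofReal, Circle.coe_inv_eq_conj]
  have hdist (x : G) : ‖v 0 - v x‖ = √2 * √(1 - ‖f x‖) := by
    rw [norm_sub_eq_sqrt_two_mul_sqrt (hv _) (hv _), hv0, Complex.ofReal_re]
  have hdiam (x : G) : ‖v x - v (-x)‖ ≤ 2 * (√2 * √(1 - ‖f x‖)) := by
    have htri := norm_sub_le_norm_sub_add_norm_sub (v x) (v 0) (v (-x))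
    rw [norm_sub_rev (v x) (v 0), hdist, hdist, hf.norm_map_neg] at htri
    linarith
  have hmid (x : G) :
      ‖v 0 - (2⁻¹ : ℂ) • (v x + v (-x))‖ ≤ √(3 / 2 + ‖f (x + x)‖ / 2 - 2 * ‖f x‖) := by
    have hre : (⟪v x, v (-x)⟫_ℂ).re ≤ ‖f (x + x)‖ := by
      rw [← hconj, hvd, Complex.conj_re]
      exact (Complex.re_le_norm _).trans_eq (by
        rw [norm_mul, Circle.norm_coe, mul_one, Complex.norm_real, norm_norm])
    refine Real.le_sqrt_of_sq_le ?_
    rw [norm_sub_midpoint_sq (hv _) (hv _) (hv _), hv0_neg, hv0, Complex.ofReal_re]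
    linarith
  have him := two_mul_abs_im_inner_le (hv0_neg x).symm (hv0_neg y).symm
    (by simpa using hconj (-x) y) (hconj x y)
  rw [hvd, Complex.im_ofReal_mul, abs_mul, abs_norm] at him
  have hx := mul_le_mul (hmid x) (hdiam y) (norm_nonneg _) (Real.sqrt_nonneg _)
  have hy := mul_le_mul (hmid y) (hdiam x) (norm_nonneg _) (Real.sqrt_nonneg _)
  linarith

end IsPositiveDefinite

section Averaging

variable {ι : Type*} [Fintype ι] {s : ℝ} {m : ι → ℕ}

lemma le_mul_pow_of_eventually_le (hm : ∀ j, 0 < m j) (hs : ∑ j, s ^ m j = 1) {g : ℕ → ℝ}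
    (hg : ∀ k, g k ≤ ∑ j, g (k + m j)) {B : ℝ} (hB : ∀ᶠ k in atTop, g k ≤ B * s ^ k) (k : ℕ) :
    g k ≤ B * s ^ k := by
  obtain ⟨N, hN⟩ := eventually_atTop.1 hB
  suffices h : ∀ i k, N ≤ k + i → g k ≤ B * s ^ k from h N k (Nat.le_add_left N k)
  intro i
  induction i with
  | zero => exact hN
  | succ i ih =>
    intro k hk
    calc g k ≤ ∑ j, g (k + m j) := hg k
      _ ≤ ∑ j, B * s ^ (k + m j) :=
        Finset.sum_le_sum fun j _ => ih _ (by have := hm j; omega)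
      _ = B * s ^ k := by
        simp only [pow_add, ← mul_assoc, ← Finset.mul_sum, hs, mul_one]

lemma le_mul_pow_of_tendsto (hs0 : 0 < s) (hm : ∀ j, 0 < m j) (hs : ∑ j, s ^ m j = 1) {g : ℕ → ℝ}
    (hg : ∀ k, g k ≤ ∑ j, g (k + m j)) {L : ℝ}
    (hL : Tendsto (fun k => g k / s ^ k) atTop (𝓝 L)) (k : ℕ) : g k ≤ L * s ^ k := by
  rw [← div_le_iff₀ (pow_pos hs0 k)]
  refine le_of_forall_gt_imp_ge_of_dense fun B hB => ?_
  rw [div_le_iff₀ (pow_pos hs0 k)]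
  refine le_mul_pow_of_eventually_le hm hs hg ?_ k
  filter_upwards [hL.eventually_le_const hB] with k hk
  rwa [div_le_iff₀ (pow_pos hs0 k)] at hk

lemma tendsto_div_pow_of_monotone (hs0 : 0 < s) (hs1 : s < 1) (hm : ∀ j, 0 < m j)
    (hs : ∑ j, s ^ m j = 1) {u g : ℕ → ℝ} (hg : ∀ k, g k = ∑ j, g (k + m j))
    (hmono : Monotone fun k => u k / s ^ k) (hle : ∀ k, u k ≤ g k)
    (hge : ∀ k, g k * (1 - u k) ≤ u k) :
    Tendsto (fun k => u k / s ^ k) atTop (𝓝 (g 0)) ∧ ∀ k, g k = g 0 * s ^ k := by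
  have hspos (k : ℕ) : 0 < s ^ k := pow_pos hs0 k
  have hneg (k : ℕ) : -g k ≤ ∑ j, -g (k + m j) := by rw [Finset.sum_neg_distrib, ← hg]
  have hbdd (l : ℕ) : u l / s ^ l ≤ g 0 := by
    have h := le_mul_pow_of_eventually_le (B := -(u l / s ^ l)) hm hs hneg ?_ 0
    · linarith
    · filter_upwards [eventually_ge_atTop l] with k hk
      have := (le_div_iff₀ (hspos k)).1 (hmono hk)
      linarith [hle k]
  obtain ⟨L, hL⟩ : ∃ L, Tendsto (fun k => u k / s ^ k) atTop (𝓝 L) :=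
    ⟨_, tendsto_atTop_ciSup hmono ⟨g 0, by rintro _ ⟨l, rfl⟩; exact hbdd l⟩⟩
  have hu : Tendsto u atTop (𝓝 0) := by
    simpa [div_mul_cancel₀ _ (hspos _).ne'] using
      hL.mul (tendsto_pow_atTop_nhds_zero_of_lt_one hs0.le hs1)
  have hgL : Tendsto (fun k => g k / s ^ k) atTop (𝓝 L) := by
    refine tendsto_of_tendsto_of_tendsto_of_le_of_le' hL
      (by simpa using hL.div (hu.const_sub 1) (by simp))
      (Eventually.of_forall fun k => div_le_div_of_nonneg_right (hle k) (hspos k).le) ?_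
    filter_upwards [hu.eventually_lt_const one_pos] with k hk
    rw [Pi.div_apply, div_right_comm]
    exact div_le_div_of_nonneg_right ((le_div_iff₀ (sub_pos.2 hk)).2 (hge k)) (hspos k).le
  have hgk (k : ℕ) : g k = L * s ^ k := by
    refine le_antisymm (le_mul_pow_of_tendsto hs0 hm hs (fun k => (hg k).le) hgL k) ?_
    have := le_mul_pow_of_tendsto hs0 hm hs hneg (by simpa only [neg_div] using hgL.neg) k
    linarith
  have hL0 : g 0 = L := by simpa using hgk 0
  exact ⟨hL0 ▸ hL, hL0 ▸ hgk⟩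

end Averaging

lemma map_nsmul_le_of_subadditive {G : Type*} [AddMonoid G] {h : G → ℝ} (h0 : h 0 = 0)
    (hadd : ∀ x y, h (x + y) ≤ h x + h y) (n : ℕ) (x : G) : h (n • x) ≤ n * h x := by
  induction n with
  | zero => simp [h0]
  | succ n ih =>
    rw [succ_nsmul]
    push_cast
    linarith [hadd (n • x) x]

lemma map_nsmul_eq_of_subadditive {G : Type*} [AddMonoid G] {h : G → ℝ}
    (hadd : ∀ x y, h (x + y) ≤ h x + h y) {p : ℕ} (hp : 1 < p) (hmul : ∀ x, h (p • x) = p * h x)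
    (n : ℕ) (x : G) : h (n • x) = n * h x := by
  have h0 : h 0 = 0 := by
    have hp0 := hmul 0
    rw [nsmul_zero] at hp0
    have : (1 : ℝ) < p := by exact_mod_cast hp
    nlinarith
  refine le_antisymm (map_nsmul_le_of_subadditive h0 hadd n x) ?_
  have hpow (k : ℕ) : h (p ^ k • x) = p ^ k * h x := by
    induction k with
    | zero => simp
    | succ k ih => rw [pow_succ', mul_nsmul', hmul, ih, pow_succ', mul_assoc]
  obtain ⟨k, hk⟩ := Nat.exists_eq_add_of_le (Nat.lt_pow_self hp (n := n)).le
  have hsplit := hadd (n • x) (k • x)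
  rw [← add_nsmul, ← hk, hpow, ← Nat.cast_pow, hk] at hsplit
  push_cast at hsplit
  linarith [map_nsmul_le_of_subadditive h0 hadd k x]

lemma exp_second_difference_le {t : ℝ} (ht : 0 ≤ t) :
    3 / 2 + Real.exp (-(4 * t)) / 2 - 2 * Real.exp (-t) ≤ (2 * t) ^ 2 := by
  have h4 : Real.exp (-(4 * t)) ≤ 1 - 4 * t + (4 * t) ^ 2 / 2 := by
    have hq : 0 < 1 + 4 * t + (4 * t) ^ 2 / 2 := by positivity
    rw [Real.exp_neg]
    refine (inv_anti₀ hq (Real.quadratic_le_exp_of_nonneg (by positivity))).trans ?_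
    rw [inv_le_iff_one_le_mul₀ hq]
    nlinarith [sq_nonneg (t ^ 2)]
  nlinarith [Real.add_one_le_exp (-t)]

section NegLogNorm

variable {G : Type*} {f : G → ℂ} {x : G}

/-- The function `-log |f|`, which for the characteristic function of a Gaussian distribution is
half the quadratic form of its covariance. Since `Real.log 0 = 0`, it is `0` where `f` vanishes. -/
noncomputable def negLogNorm (f : G → ℂ) (x : G) : ℝ := -Real.log ‖f x‖

lemma exp_neg_negLogNorm (hx : f x ≠ 0) : Real.exp (-negLogNorm f x) = ‖f x‖ := by
  rw [negLogNorm, neg_neg, Real.exp_log (norm_pos_iff.2 hx)]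

lemma one_sub_norm_le_negLogNorm (hx : f x ≠ 0) : 1 - ‖f x‖ ≤ negLogNorm f x := by
  linarith [Real.log_le_sub_one_of_pos (norm_pos_iff.2 hx), negLogNorm.eq_def f x]

lemma negLogNorm_mul_norm_le (hx : f x ≠ 0) : negLogNorm f x * ‖f x‖ ≤ 1 - ‖f x‖ := by
  have hpos := norm_pos_iff.2 hx
  rw [← le_div_iff₀ hpos, sub_div, div_self hpos.ne', one_div, negLogNorm]
  linarith [Real.one_sub_inv_le_log_of_pos hpos]

end NegLogNorm

namespace IsPositiveDefinite

variable {G : Type*} [AddCommGroup G] {f : G → ℂ}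

lemma one_sub_norm_nsmul_le (hf : IsPositiveDefinite f) (h0 : f 0 = 1) (n : ℕ) (x : G) :
    1 - ‖f (n • x)‖ ≤ n ^ 2 * (1 - ‖f x‖) := by
  have hsqrt := map_nsmul_le_of_subadditive (h := fun x => √(1 - ‖f x‖)) (by simp [h0])
    (hf.sqrt_one_sub_norm_add_le h0) n x
  have hnonneg (x : G) : 0 ≤ 1 - ‖f x‖ := sub_nonneg.2 (hf.norm_le_one h0 x)
  calc 1 - ‖f (n • x)‖ = √(1 - ‖f (n • x)‖) ^ 2 := (Real.sq_sqrt (hnonneg _)).symm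
    _ ≤ (n * √(1 - ‖f x‖)) ^ 2 := pow_le_pow_left₀ (Real.sqrt_nonneg _) hsqrt 2
    _ = n ^ 2 * (1 - ‖f x‖) := by rw [mul_pow, Real.sq_sqrt (hnonneg _)]

lemma negLogNorm_nonneg (hf : IsPositiveDefinite f) (h0 : f 0 = 1) (x : G) :
    0 ≤ negLogNorm f x :=
  neg_nonneg.2 (Real.log_nonpos (norm_nonneg _) (hf.norm_le_one h0 x))

end IsPositiveDefinite

lemma addMonoidEnd_pow_add_apply {G : Type*} [AddMonoid G] (d : AddMonoid.End G) (k l : ℕ)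
    (x : G) : (d ^ (k + l)) x = (d ^ l) ((d ^ k) x) := by
  rw [add_comm, pow_add, AddMonoid.End.coe_mul, Function.comp_apply]

/-- `f` is the nowhere vanishing characteristic function of a random variable `X` such that `X` has
the same distribution as `∑ j, εⱼ p ^ (-mⱼ) Xⱼ`, where the `Xⱼ` are independent copies of `X`, the
`εⱼ` are signs and `∑ j, p ^ (-2 mⱼ) = 1`. Division by `p` in the group `G` of characters is the
endomorphism `d`. -/
structure IsPolyaSolution {G ι : Type*} [AddCommGroup G] [Fintype ι] (f : G → ℂ) (p : ℕ)
    (d : AddMonoid.End G) (m : ι → ℕ) (ε : ι → ℤˣ) : Prop where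
  isPositiveDefinite : IsPositiveDefinite f
  map_zero : f 0 = 1
  map_ne_zero : ∀ x, f x ≠ 0
  one_lt : 1 < p
  nsmul_div : ∀ x, p • d x = x
  exponent_pos : ∀ j, 0 < m j
  sum_pow : ∑ j, ((p : ℝ)⁻¹ ^ 2) ^ m j = 1
  eq_prod : ∀ x, f x = ∏ j, f (ε j • (d ^ m j) x)

namespace IsPolyaSolution

variable {G ι : Type*} [AddCommGroup G] [Fintype ι] {f : G → ℂ} {p : ℕ} {d : AddMonoid.End G}
  {m : ι → ℕ} {ε : ι → ℤˣ}

lemma scale_pos (hf : IsPolyaSolution f p d m ε) : 0 < (p : ℝ)⁻¹ ^ 2 := by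
  have := hf.one_lt
  positivity

lemma scale_lt_one (hf : IsPolyaSolution f p d m ε) : (p : ℝ)⁻¹ ^ 2 < 1 :=
  pow_lt_one₀ (by positivity) (inv_lt_one_of_one_lt₀ (by exact_mod_cast hf.one_lt)) two_ne_zero

lemma negLogNorm_eq_sum (hf : IsPolyaSolution f p d m ε) (x : G) :
    negLogNorm f x = ∑ j, negLogNorm f ((d ^ m j) x) := by
  simp only [negLogNorm]
  rw [hf.eq_prod, norm_prod, Real.log_prod fun j _ => norm_ne_zero_iff.2 (hf.map_ne_zero _),
    Finset.sum_neg_distrib]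
  simp only [hf.isPositiveDefinite.norm_units_smul]

lemma monotone_one_sub_norm_div_pow (hf : IsPolyaSolution f p d m ε) (x : G) :
    Monotone fun k => (1 - ‖f ((d ^ k) x)‖) / ((p : ℝ)⁻¹ ^ 2) ^ k := by
  refine monotone_nat_of_le_succ fun k => ?_
  have hdiv : p • (d ^ (k + 1)) x = (d ^ k) x := by
    rw [addMonoidEnd_pow_add_apply, pow_one, hf.nsmul_div]
  have hle := hf.isPositiveDefinite.one_sub_norm_nsmul_le hf.map_zero p ((d ^ (k + 1)) x)
  rw [hdiv] at hle
  calc (1 - ‖f ((d ^ k) x)‖) / ((p : ℝ)⁻¹ ^ 2) ^ k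
      ≤ p ^ 2 * (1 - ‖f ((d ^ (k + 1)) x)‖) / ((p : ℝ)⁻¹ ^ 2) ^ k := by gcongr
    _ = (1 - ‖f ((d ^ (k + 1)) x)‖) / ((p : ℝ)⁻¹ ^ 2) ^ (k + 1) := by
      rw [pow_succ (_ : ℝ) k, inv_pow, div_mul_eq_div_div, div_inv_eq_mul]
      ring

lemma tendsto_one_sub_norm_div_pow_and_negLogNorm_pow (hf : IsPolyaSolution f p d m ε) (x : G) :
    Tendsto (fun k => (1 - ‖f ((d ^ k) x)‖) / ((p : ℝ)⁻¹ ^ 2) ^ k) atTop (𝓝 (negLogNorm f x)) ∧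
      ∀ k, negLogNorm f ((d ^ k) x) = negLogNorm f x * ((p : ℝ)⁻¹ ^ 2) ^ k := by
  have hg (k : ℕ) :
      negLogNorm f ((d ^ k) x) = ∑ j, negLogNorm f ((d ^ (k + m j)) x) := by
    rw [hf.negLogNorm_eq_sum]
    simp only [addMonoidEnd_pow_add_apply]
  simpa using tendsto_div_pow_of_monotone hf.scale_pos hf.scale_lt_one hf.exponent_pos hf.sum_pow
    hg (hf.monotone_one_sub_norm_div_pow x) (fun k => one_sub_norm_le_negLogNorm (hf.map_ne_zero _))
    (fun k => by simpa using negLogNorm_mul_norm_le (hf.map_ne_zero ((d ^ k) x)))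

lemma negLogNorm_pow (hf : IsPolyaSolution f p d m ε) (k : ℕ) (x : G) :
    negLogNorm f ((d ^ k) x) = negLogNorm f x * ((p : ℝ)⁻¹ ^ 2) ^ k :=
  (hf.tendsto_one_sub_norm_div_pow_and_negLogNorm_pow x).2 k

lemma sqrt_negLogNorm_add_le (hf : IsPolyaSolution f p d m ε) (x y : G) :
    √(negLogNorm f (x + y)) ≤ √(negLogNorm f x) + √(negLogNorm f y) := by
  have htendsto (z : G) := (hf.tendsto_one_sub_norm_div_pow_and_negLogNorm_pow z).1.sqrt
  refine le_of_tendsto_of_tendsto' (htendsto (x + y)) ((htendsto x).add (htendsto y)) fun k => ?_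
  have hscale := pow_nonneg hf.scale_pos.le k
  rw [Real.sqrt_div' _ hscale, Real.sqrt_div' _ hscale, Real.sqrt_div' _ hscale, ← add_div, map_add]
  gcongr
  exact hf.isPositiveDefinite.sqrt_one_sub_norm_add_le hf.map_zero _ _

lemma negLogNorm_nsmul (hf : IsPolyaSolution f p d m ε) (n : ℕ) (x : G) :
    negLogNorm f (n • x) = n ^ 2 * negLogNorm f x := by
  have hnonneg := hf.isPositiveDefinite.negLogNorm_nonneg hf.map_zero
  have hp (x : G) : √(negLogNorm f (p • x)) = p * √(negLogNorm f x) := by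
    have h := hf.negLogNorm_pow 1 (p • x)
    rw [pow_one, map_nsmul, hf.nsmul_div, pow_one] at h
    have := hf.one_lt
    rw [h, Real.sqrt_mul (hnonneg _), Real.sqrt_sq (by positivity)]
    field_simp
  have hn := map_nsmul_eq_of_subadditive (h := fun x => √(negLogNorm f x))
    hf.sqrt_negLogNorm_add_le hf.one_lt hp n x
  rw [← Real.sq_sqrt (hnonneg (n • x)), hn, mul_pow, Real.sq_sqrt (hnonneg x)]

lemma negLogNorm_zsmul (hf : IsPolyaSolution f p d m ε) (n : ℤ) (x : G) :
    negLogNorm f (n • x) = n ^ 2 * negLogNorm f x := by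
  obtain ⟨k, rfl | rfl⟩ := n.eq_nat_or_neg
  · exact_mod_cast hf.negLogNorm_nsmul k x
  · rw [neg_smul, negLogNorm, hf.isPositiveDefinite.norm_map_neg, ← negLogNorm]
    rw [natCast_zsmul, hf.negLogNorm_nsmul, Int.cast_neg, Int.cast_natCast, neg_sq]

lemma phaseDefect_eq_prod (hf : IsPolyaSolution f p d m ε) (x y : G) :
    phaseDefect f x y = ∏ j, phaseDefect f (ε j • (d ^ m j) x) (ε j • (d ^ m j) y) := by
  have hphase (z : G) : phase (f z) = ∏ j, phase (f (ε j • (d ^ m j) z)) := by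
    rw [hf.eq_prod, phase_prod _ fun j _ => hf.map_ne_zero _]
  simp only [phaseDefect, Finset.prod_div_distrib, Finset.prod_mul_distrib, ← hphase,
    ← smul_add, ← map_add]

lemma norm_phaseDefect_sub_one_le_sum (hf : IsPolyaSolution f p d m ε) (x y : G) :
    ‖(phaseDefect f x y : ℂ) - 1‖ ≤
      ∑ j, ‖(phaseDefect f ((d ^ m j) x) ((d ^ m j) y) : ℂ) - 1‖ := by
  rw [hf.phaseDefect_eq_prod]
  simpa only [hf.isPositiveDefinite.norm_phaseDefect_units_smul_sub_one] using
    norm_circle_prod_sub_one_le Finset.univ fun j =>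
      phaseDefect f (ε j • (d ^ m j) x) (ε j • (d ^ m j) y)

lemma sqrt_second_difference_le (hf : IsPolyaSolution f p d m ε) (x : G) :
    √(3 / 2 + ‖f (x + x)‖ / 2 - 2 * ‖f x‖) ≤ 2 * negLogNorm f x := by
  have hx := hf.isPositiveDefinite.negLogNorm_nonneg hf.map_zero x
  refine Real.sqrt_le_iff.2 ⟨by positivity, ?_⟩
  have h2 : negLogNorm f (x + x) = 4 * negLogNorm f x := by
    rw [← two_nsmul, hf.negLogNorm_nsmul]
    norm_num
  rw [← exp_neg_negLogNorm (hf.map_ne_zero (x + x)), ← exp_neg_negLogNorm (hf.map_ne_zero x), h2]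
  exact exp_second_difference_le hx

lemma norm_phaseDefect_sub_one_le (hf : IsPolyaSolution f p d m ε) {x y : G}
    (hxy : (√(negLogNorm f x) + √(negLogNorm f y)) ^ 2 ≤ 1 / 2) :
    ‖(phaseDefect f x y : ℂ) - 1‖ ≤
      8 * √2 * (negLogNorm f x * √(negLogNorm f y) + negLogNorm f y * √(negLogNorm f x)) := by
  have hpd := hf.isPositiveDefinite
  set z := phaseDefect f x y
  have hsqrt (x : G) : √(1 - ‖f x‖) ≤ √(negLogNorm f x) :=
    Real.sqrt_le_sqrt (one_sub_norm_le_negLogNorm (hf.map_ne_zero x))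
  have hre : 1 / 2 ≤ ‖f (x + y)‖ * (z : ℂ).re := by
    have h := Real.sqrt_le_iff.1 ((hpd.sqrt_one_sub_re_le hf.map_zero x y).trans
      (add_le_add (hsqrt x) (hsqrt y)))
    linarith [h.2]
  have hre_pos : 0 < (z : ℂ).re := pos_of_mul_pos_right (by linarith) (norm_nonneg _)
  have hnorm : 1 / 2 ≤ ‖f (x + y)‖ := hre.trans (mul_le_of_le_one_right (norm_nonneg _)
    ((Complex.re_le_norm _).trans_eq (Circle.norm_coe _)))
  have hbound (x y : G) : √(3 / 2 + ‖f (x + x)‖ / 2 - 2 * ‖f x‖) * √(1 - ‖f y‖) ≤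
      2 * negLogNorm f x * √(negLogNorm f y) :=
    mul_le_mul (hf.sqrt_second_difference_le x) (hsqrt y) (Real.sqrt_nonneg _)
      (mul_nonneg zero_le_two (hpd.negLogNorm_nonneg hf.map_zero x))
  calc ‖(z : ℂ) - 1‖ ≤ 2 * |(z : ℂ).im| :=
      norm_circle_sub_one_le_two_mul_abs_im z hre_pos.le
    _ ≤ 4 * (‖f (x + y)‖ * |(z : ℂ).im|) := by nlinarith [abs_nonneg (z : ℂ).im]
    _ ≤ 4 * (√2 * (2 * negLogNorm f x * √(negLogNorm f y) +
          2 * negLogNorm f y * √(negLogNorm f x))) := by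
      refine mul_le_mul_of_nonneg_left ?_ zero_le_four
      exact (hpd.norm_mul_abs_im_phaseDefect_le hf.map_zero x y).trans
        (mul_le_mul_of_nonneg_left (add_le_add (hbound x y) (hbound y x)) (Real.sqrt_nonneg _))
    _ = _ := by ring

lemma tendsto_norm_phaseDefect_sub_one_div_pow (hf : IsPolyaSolution f p d m ε) (x y : G) :
    Tendsto (fun k => ‖(phaseDefect f ((d ^ k) x) ((d ^ k) y) : ℂ) - 1‖ / ((p : ℝ)⁻¹ ^ 2) ^ k)
      atTop (𝓝 0) := by
  set s := (p : ℝ)⁻¹ ^ 2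
  have hspos (k : ℕ) : 0 < s ^ k := pow_pos hf.scale_pos k
  have hsqrt (k : ℕ) (x : G) : √(negLogNorm f ((d ^ k) x)) = √(negLogNorm f x) * √(s ^ k) := by
    rw [hf.negLogNorm_pow, Real.sqrt_mul' _ (hspos k).le]
  have hs : Tendsto (fun k => √(s ^ k)) atTop (𝓝 0) := by
    simpa only [Real.sqrt_zero] using
      (tendsto_pow_atTop_nhds_zero_of_lt_one hf.scale_pos.le hf.scale_lt_one).sqrt
  have hsmall : ∀ᶠ k in atTop,
      (√(negLogNorm f ((d ^ k) x)) + √(negLogNorm f ((d ^ k) y))) ^ 2 ≤ 1 / 2 := by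
    have hlim : Tendsto (fun k =>
        (√(negLogNorm f ((d ^ k) x)) + √(negLogNorm f ((d ^ k) y))) ^ 2) atTop (𝓝 0) := by
      simp only [hsqrt]
      simpa using ((hs.const_mul √(negLogNorm f x)).add
        (hs.const_mul √(negLogNorm f y))).pow 2
    exact hlim.eventually_le_const (by norm_num)
  refine squeeze_zero' (Eventually.of_forall fun k => by positivity) ?_
    (by simpa using hs.const_mul (8 * √2 * (negLogNorm f x * √(negLogNorm f y) +
      negLogNorm f y * √(negLogNorm f x))))
  filter_upwards [hsmall] with k hk
  rw [div_le_iff₀ (hspos k)]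
  refine (hf.norm_phaseDefect_sub_one_le hk).trans_eq ?_
  rw [hsqrt, hsqrt, hf.negLogNorm_pow, hf.negLogNorm_pow]
  ring

lemma phaseDefect_eq_one (hf : IsPolyaSolution f p d m ε) (x y : G) : phaseDefect f x y = 1 := by
  have hle := le_mul_pow_of_tendsto hf.scale_pos hf.exponent_pos hf.sum_pow (fun k => ?_)
    (hf.tendsto_norm_phaseDefect_sub_one_div_pow x y) 0
  · rw [zero_mul, norm_le_zero_iff, sub_eq_zero, Circle.coe_eq_one] at hle
    exact hle
  · refine (hf.norm_phaseDefect_sub_one_le_sum _ _).trans_eq ?_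
    simp only [addMonoidEnd_pow_add_apply]

theorem exists_addChar_mul_exp (hf : IsPolyaSolution f p d m ε) :
    ∃ χ : AddChar G Circle, ∀ x, f x = χ x * Real.exp (-negLogNorm f x) := by
  refine ⟨⟨fun x => phase (f x), by rw [hf.map_zero, phase_one],
    fun x y => div_eq_one.1 (hf.phaseDefect_eq_one x y)⟩, fun x => ?_⟩
  rw [exp_neg_negLogNorm (hf.map_ne_zero x), mul_comm]
  exact (norm_mul_phase (f x)).symm

end IsPolyaSolution

section RatSMul

variable {r : ℚ} {Y : AddSubgroup ℚ}

lemma mul_mem_of_ratSMul_eq (h : ratSMul r Y = Y) {y : ℚ} (hy : y ∈ Y) : r * y ∈ Y :=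
  SetLike.mem_coe.1 (h ▸ Set.mem_image_of_mem _ hy)

lemma ratSMul_inv_eq (hr : r ≠ 0) (h : ratSMul r Y = Y) : ratSMul r⁻¹ Y = Y := by
  conv_lhs => rw [ratSMul, ← h, ratSMul, Set.image_image]
  simp only [inv_mul_cancel_left₀ hr, Set.image_id']

lemma ratSMul_natCast_eq_of_dvd_num {q : ℕ} (hq : q ∣ r.num.natAbs) (h : ratSMul r Y = Y) :
    ratSMul (q : ℚ) Y = Y := by
  refine Set.Subset.antisymm ?_ fun y hy => ?_
  · rintro _ ⟨y, hy, rfl⟩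
    simpa using Y.nsmul_mem hy q
  obtain ⟨z, hz, rfl⟩ : y ∈ ratSMul r Y := h ▸ hy
  obtain ⟨t, ht⟩ := Int.natCast_dvd.2 hq
  obtain ⟨u, v, huv⟩ := Nat.isCoprime_iff_coprime.2 (r.reduced.coprime_dvd_left hq)
  have hr : (r.den : ℚ) * r = q * t := by
    rw [Rat.den_mul_eq_num]
    exact_mod_cast ht
  have hbezout : (u * q + v * r.den : ℚ) = 1 := by exact_mod_cast huv
  refine ⟨u • (r * z) + (v * t) • z, Y.add_mem (Y.zsmul_mem hy u) (Y.zsmul_mem hz _), ?_⟩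
  simp only [zsmul_eq_mul]
  push_cast
  linear_combination (r * z) * hbezout - v * z * hr

lemma num_natAbs_eq_pow {p : ℕ} (hqY : ∀ q : ℕ, q.Prime → q ≠ p → ratSMul (q : ℚ) Y ≠ Y)
    (hr : r ≠ 0) (h : ratSMul r Y = Y) : ∃ i, r.num.natAbs = p ^ i :=
  ⟨_, Nat.eq_prime_pow_of_unique_prime_dvd (by simpa using hr) fun {q} hq hdvd => by
    by_contra hne
    exact hqY q hq hne (ratSMul_natCast_eq_of_dvd_num hdvd h)⟩

lemma exists_eq_units_mul_inv_pow {p : ℕ} (hp : 1 < p)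
    (hqY : ∀ q : ℕ, q.Prime → q ≠ p → ratSMul (q : ℚ) Y ≠ Y)
    (hr : r ≠ 0) (h : ratSMul r Y = Y) (hr1 : r ^ 2 < 1) :
    ∃ k, 0 < k ∧ ∃ ε : ℤˣ, r = ε * (p : ℚ)⁻¹ ^ k := by
  have hp0 : (p : ℚ) ≠ 0 := by exact_mod_cast hp.ne_bot
  obtain ⟨i, hi⟩ := num_natAbs_eq_pow hqY hr h
  obtain ⟨j, hj⟩ := num_natAbs_eq_pow hqY (inv_ne_zero hr) (ratSMul_inv_eq hr h)
  have hden : r.den = p ^ j := by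
    rw [← hj, Rat.num_inv, Int.natAbs_mul, Int.natAbs_sign_of_ne_zero (Rat.num_ne_zero.2 hr),
      one_mul, Int.natAbs_natCast]
  have habs : |r| = p ^ i / p ^ j := by
    rw [Rat.abs_def, hi, hden, Rat.divInt_eq_div]
    push_cast
    rfl
  have hij : i < j := by
    have hlt := (sq_lt_one_iff_abs_lt_one r).1 hr1
    rw [habs, div_lt_one (by positivity)] at hlt
    exact (pow_lt_pow_iff_right₀ (by exact_mod_cast hp)).1 hlt
  have hpow : |r| = (p : ℚ)⁻¹ ^ (j - i) := by
    rw [habs, inv_pow, pow_sub₀ _ hp0 hij.le, mul_inv, inv_inv, mul_comm, div_eq_mul_inv]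
  refine ⟨j - i, Nat.sub_pos_of_lt hij, ?_⟩
  rcases abs_choice r with hsign | hsign
  · exact ⟨1, by simpa [hsign] using hpow⟩
  · exact ⟨-1, by simpa [hsign, neg_eq_iff_eq_neg] using hpow⟩

/-- Multiplication by a rational number, as an endomorphism of a subgroup of `ℚ` stable under it. -/
def ratMulEnd (r : ℚ) (Y : AddSubgroup ℚ) (h : ∀ y ∈ Y, r * y ∈ Y) : AddMonoid.End Y :=
  ((AddMonoidHom.mulLeft r).comp Y.subtype).codRestrict Y fun y => h y y.2

lemma coe_ratMulEnd_pow (h : ∀ y ∈ Y, r * y ∈ Y) (k : ℕ) (y : Y) :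
    ((ratMulEnd r Y h ^ k) y : ℚ) = r ^ k * y := by
  induction k with
  | zero => simp
  | succ k ih =>
    rw [addMonoidEnd_pow_add_apply, pow_one, pow_succ', mul_assoc, ← ih]
    rfl

lemma coe_units_smul_ratMulEnd_pow (h : ∀ y ∈ Y, r * y ∈ Y) (ε : ℤˣ) (k : ℕ) (y : Y) :
    ((ε • (ratMulEnd r Y h ^ k) y : Y) : ℚ) = ε * r ^ k * y := by
  rw [Units.smul_def, AddSubgroup.coe_zsmul, zsmul_eq_mul, coe_ratMulEnd_pow, mul_assoc]

lemma nsmul_ratMulEnd_inv {p : ℕ} (hp : p ≠ 0) (h : ∀ y ∈ Y, (p : ℚ)⁻¹ * y ∈ Y) (y : Y) :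
    p • ratMulEnd (p : ℚ)⁻¹ Y h y = y := by
  ext
  rw [AddSubgroup.coe_nsmul, nsmul_eq_mul]
  exact mul_inv_cancel_left₀ (Nat.cast_ne_zero.2 hp) (y : ℚ)

lemma exists_eq_mul_sq {q : Y → ℝ} (hq : ∀ y, 0 ≤ q y)
    (hzsmul : ∀ (n : ℤ) (y : Y), q (n • y) = n ^ 2 * q y) :
    ∃ c, 0 ≤ c ∧ ∀ y : Y, q y = c * ((y : ℚ) : ℝ) ^ 2 := by
  have hq0 : q 0 = 0 := by simpa using hzsmul 0 0
  by_cases hY : ∃ z : Y, z ≠ 0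
  swap
  · push Not at hY
    exact ⟨0, le_rfl, fun y => by rw [hY y, hq0, zero_mul]⟩
  obtain ⟨z, hz⟩ := hY
  have hz' : ((z : ℚ) : ℝ) ≠ 0 := by simpa using hz
  refine ⟨q z / ((z : ℚ) : ℝ) ^ 2, div_nonneg (hq z) (sq_nonneg _), fun y => ?_⟩
  obtain ⟨a, b, hb, hab⟩ : ∃ a b : ℤ, b ≠ 0 ∧ b • y = a • z := by
    refine ⟨(y : ℚ).num * (z : ℚ).den, (y : ℚ).den * (z : ℚ).num, by simpa using hz, ?_⟩
    ext
    simp only [AddSubgroup.coe_zsmul, zsmul_eq_mul]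
    push_cast
    linear_combination ((z : ℚ).num : ℚ) * Rat.den_mul_eq_num (y : ℚ) -
      ((y : ℚ).num : ℚ) * Rat.den_mul_eq_num (z : ℚ)
  have hb' : (b : ℝ) ≠ 0 := by exact_mod_cast hb
  have hcoe : (b * (y : ℚ) : ℝ) = a * (z : ℚ) := by
    have : b * (y : ℚ) = a * z := by simpa using congrArg Subtype.val hab
    exact_mod_cast this
  have hquad : (b : ℝ) ^ 2 * q y = a ^ 2 * q z := by rw [← hzsmul, hab, hzsmul]
  rw [div_mul_eq_mul_div, eq_div_iff (pow_ne_zero 2 hz')]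
  refine mul_left_cancel₀ (pow_ne_zero 2 hb') ?_
  linear_combination ((z : ℚ) : ℝ) ^ 2 * hquad -
    q z * (b * (y : ℚ) + a * (z : ℚ)) * hcoe

end RatSMul

lemma sq_lt_one_of_sum_sq_eq_one {ι R : Type*} [Fintype ι] [Nontrivial ι] [CommRing R]
    [LinearOrder R] [IsStrictOrderedRing R] {r : ι → R} (hr : ∀ j, r j ≠ 0)
    (hsum : ∑ j, r j ^ 2 = 1) (j : ι) : r j ^ 2 < 1 := by
  obtain ⟨i, hij⟩ := exists_ne j
  rw [← hsum]
  exact Finset.single_lt_sum (f := fun j => r j ^ 2) hij (Finset.mem_univ j) (Finset.mem_univ i)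
    (sq_pos_of_ne_zero (hr i)) fun k _ _ => sq_nonneg (r k)

lemma sum_inv_sq_pow_eq_one {ι : Type*} [Fintype ι] {p : ℕ} {r : ι → ℚ} {m : ι → ℕ} {ε : ι → ℤˣ}
    (hr : ∀ j, r j = ε j * (p : ℚ)⁻¹ ^ m j) (hsum : ∑ j, r j ^ 2 = 1) :
    ∑ j, ((p : ℝ)⁻¹ ^ 2) ^ m j = 1 := by
  have hsq (j : ι) : r j ^ 2 = ((p : ℚ)⁻¹ ^ 2) ^ m j := by
    rw [hr, mul_pow, ← Int.cast_pow, ← Units.val_pow_eq_pow_val, Int.units_sq, Units.val_one,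
      Int.cast_one, one_mul, pow_right_comm]
  simp only [hsq] at hsum
  simpa using congrArg (Rat.cast : ℚ → ℝ) hsum

/-- Dual formulation of the Corollary to the main theorem: a nonvanishing positive definite
solution of `f(y) = ∏ⱼ f(rⱼ y)` on the character group of a solenoid satisfying
condition (i) is Gaussian. -/
theorem generalized_polya_solenoid_nonvanishing
    (p : ℕ) (hp : p.Prime) (Y : AddSubgroup ℚ) (hY : Y ≠ ⊥)
    (hpY : ratSMul (p : ℚ) Y = (Y : Set ℚ))
    (hqY : ∀ q : ℕ, q.Prime → q ≠ p → ratSMul (q : ℚ) Y ≠ (Y : Set ℚ))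
    (n : ℕ) (hn : 2 ≤ n) (r : Fin n → ℚ) (hr0 : ∀ j, r j ≠ 0)
    (hrY : ∀ j, ratSMul (r j) Y = (Y : Set ℚ))
    (hsum : ∑ j, (r j) ^ 2 = 1)
    (f : Y → ℂ) (hpd : IsPositiveDefinite f) (hf0 : f 0 = 1)
    (hmem : ∀ (j : Fin n) (y : Y), r j * (y : ℚ) ∈ Y)
    (heq : ∀ y : Y, f y = ∏ j, f ⟨r j * (y : ℚ), hmem j y⟩)
    (hne : ∀ y : Y, f y ≠ 0) :
    ∃ (σ : ℝ), 0 ≤ σ ∧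
      ∃ (χ : AddChar Y Circle),
        ∀ y : Y, f y = (χ y : ℂ) * Complex.exp (-(σ : ℂ) * ((y : ℚ) : ℂ) ^ 2) := by
  have hp0 : (p : ℚ) ≠ 0 := by exact_mod_cast hp.ne_zero
  have : Nontrivial (Fin n) := Fin.nontrivial_iff_two_le.2 hn
  choose m hm ε hr using fun j => exists_eq_units_mul_inv_pow hp.one_lt hqY (hr0 j) (hrY j)
    (sq_lt_one_of_sum_sq_eq_one hr0 hsum j)
  let d : AddMonoid.End Y :=
    ratMulEnd (p : ℚ)⁻¹ Y fun _ => mul_mem_of_ratSMul_eq (ratSMul_inv_eq hp0 hpY)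
  have hf : IsPolyaSolution f p d m ε :=
    { isPositiveDefinite := hpd
      map_zero := hf0
      map_ne_zero := hne
      one_lt := hp.one_lt
      nsmul_div := nsmul_ratMulEnd_inv hp.ne_zero _
      exponent_pos := hm
      sum_pow := sum_inv_sq_pow_eq_one hr hsum
      eq_prod := fun y => by
        rw [heq]
        congr! with j
        rw [coe_units_smul_ratMulEnd_pow, ← hr] }
  obtain ⟨χ, hχ⟩ := hf.exists_addChar_mul_exp
  obtain ⟨σ, hσ, hquad⟩ := exists_eq_mul_sq (hpd.negLogNorm_nonneg hf0) hf.negLogNorm_zsmul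
  refine ⟨σ, hσ, χ, fun y => ?_⟩
  rw [hχ, hquad]
  push_cast
  rw [neg_mul]
end

section
/- Let ξ_1, …, ξ_n (n ≥ 2) be independent identically distributed real-valued random variables with common distribution μ, and let α_1, …, α_n be nonzero real numbers such that α_1² + ⋯ + α_n² = 1. If ξ_1 and α_1ξ_1 + ⋯ + α_nξ_n are identically distributed, then μ is a Gaussian distribution on ℝ, i.e., there exist m ∈ ℝ and v ≥ 0 such that μ is the (possibly degenerate) normal distribution with mean m and variance v. -/
open MeasureTheory ProbabilityTheory
open scoped BigOperators NNReal

/-!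
The characteristic function `φ` of `μ` satisfies `φ t = ∏ⱼ φ (αⱼ t)`. If `q t ≤ ∑ⱼ q (αⱼ t)`, then,
since `∑ⱼ αⱼ² = 1`, the ratio `q t / t²` is at most a weighted average of the ratios
`q (αⱼ t) / (αⱼ t)²`, so it does not decrease along a suitable sequence of arguments tending to `0`.

For `q = log ‖φ‖` this bounds `(1 - ‖φ s‖²) / s²` along a sequence `s → 0`, and by Fatou's lemma the
symmetrization of `μ` has a second moment, hence so does `μ`. Its mean `m` then satisfies
`(∑ⱼ αⱼ) m = m`, so the characteristic function `ψ` of the Gaussian law with the mean and variance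
of `μ` solves the same functional equation. Since `φ - ψ = o(t²)`, the choice `q = ‖φ - ψ‖` gives
`φ = ψ`.
-/

open Filter Topology Asymptotics

section Descent

lemma frequently_nhdsNE_zero_of_forall_exists_norm_le {E : Type*} [NormedAddCommGroup E]
    {P : E → Prop} {b : ℝ} (hb : b < 1)
    (h : ∀ x ≠ 0, P x → ∃ y ≠ 0, ‖y‖ ≤ b * ‖x‖ ∧ P y) {x : E} (hx : x ≠ 0) (hP : P x) :
    ∃ᶠ y in 𝓝[≠] (0 : E), P y := by
  have hb0 : 0 ≤ b := by
    obtain ⟨y, -, hy, -⟩ := h x hx hP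
    exact nonneg_of_mul_nonneg_left ((norm_nonneg y).trans hy) (norm_pos_iff.2 hx)
  intro hev
  obtain ⟨ε, hε, hball⟩ := Metric.mem_nhdsWithin_iff.1 hev
  have not_of_pow_mul_lt (k : ℕ) : ∀ y ≠ 0, b ^ k * ‖y‖ < ε → ¬ P y := by
    induction k with
    | zero =>
      intro y hy hlt
      exact hball ⟨by simpa using hlt, hy⟩
    | succ k ih =>
      intro y hy hlt hPy
      obtain ⟨z, hz, hzy, hPz⟩ := h y hy hPy
      refine ih z hz ?_ hPz
      calc b ^ k * ‖z‖ ≤ b ^ k * (b * ‖y‖) := by gcongr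
        _ = b ^ (k + 1) * ‖y‖ := by ring
        _ < ε := hlt
  have hlim : Tendsto (fun k : ℕ => b ^ k * ‖x‖) atTop (𝓝 0) := by
    simpa using (tendsto_pow_atTop_nhds_zero_of_lt_one hb0 hb).mul_const ‖x‖
  obtain ⟨k, hk⟩ := (hlim.eventually_lt_const hε).exists
  exact not_of_pow_mul_lt k x hx hk hP

variable {ι : Type*} {α : ι → ℝ}

lemma frequently_nhdsNE_zero_of_forall_exists_mul [Finite ι] (hα : ∀ j, |α j| < 1)
    {P : ℝ → Prop} (h : ∀ t ≠ 0, P t → ∃ j, α j * t ≠ 0 ∧ P (α j * t)) {t : ℝ} (ht : t ≠ 0)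
    (hP : P t) : ∃ᶠ s in 𝓝[≠] (0 : ℝ), P s := by
  obtain ⟨i, -⟩ := h t ht hP
  have : Nonempty ι := ⟨i⟩
  obtain ⟨i, hi⟩ := Finite.exists_max fun j => |α j|
  refine frequently_nhdsNE_zero_of_forall_exists_norm_le (hα i) (fun s hs hPs => ?_) ht hP
  obtain ⟨j, hne, hj⟩ := h s hs hPs
  refine ⟨α j * s, hne, ?_, hj⟩
  rw [norm_mul]
  exact mul_le_mul_of_nonneg_right (hi j) (norm_nonneg s)

lemma exists_div_sq_le_div_sq_of_le_sum [Fintype ι] (hsum : ∑ j, α j ^ 2 = 1) {q : ℝ → ℝ}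
    (hq0 : q 0 ≤ 0) {t : ℝ} (ht : t ≠ 0) (hq : q t ≤ ∑ j, q (α j * t)) :
    ∃ j, α j * t ≠ 0 ∧ q t / t ^ 2 ≤ q (α j * t) / (α j * t) ^ 2 := by
  by_contra! hlt
  set c := q t / t ^ 2 with hc
  have hlt' (j : ι) (hj : α j ≠ 0) : q (α j * t) < c * (α j * t) ^ 2 :=
    (div_lt_iff₀ (by positivity)).1 (hlt j (mul_ne_zero hj ht))
  have hle (j : ι) : q (α j * t) ≤ c * (α j * t) ^ 2 := by
    rcases eq_or_ne (α j) 0 with hj | hj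
    · simpa [hj] using hq0
    · exact (hlt' j hj).le
  obtain ⟨i, hi⟩ : ∃ i, α i ≠ 0 := by
    by_contra! h0
    simp [h0] at hsum
  have : q t < q t := calc
    q t ≤ ∑ j, q (α j * t) := hq
    _ < ∑ j, c * (α j * t) ^ 2 :=
      Finset.sum_lt_sum (fun j _ => hle j) ⟨i, Finset.mem_univ i, hlt' i hi⟩
    _ = c * ((∑ j, α j ^ 2) * t ^ 2) := by simp_rw [mul_pow, ← Finset.mul_sum, ← Finset.sum_mul]
    _ = q t := by rw [hsum, one_mul, hc, div_mul_cancel₀ _ (pow_ne_zero 2 ht)]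
  exact this.false

variable [Fintype ι]

lemma frequently_div_sq_le_div_sq_of_le_sum (hα : ∀ j, |α j| < 1) (hsum : ∑ j, α j ^ 2 = 1)
    {q : ℝ → ℝ} (hq0 : q 0 ≤ 0) (hq : ∀ t, q t ≤ ∑ j, q (α j * t)) {t : ℝ} (ht : t ≠ 0) :
    ∃ᶠ s in 𝓝[≠] (0 : ℝ), q t / t ^ 2 ≤ q s / s ^ 2 := by
  refine frequently_nhdsNE_zero_of_forall_exists_mul hα (fun s hs hts => ?_) ht le_rfl
  obtain ⟨j, hne, hj⟩ := exists_div_sq_le_div_sq_of_le_sum hsum hq0 hs (hq s)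
  exact ⟨j, hne, hts.trans hj⟩

lemma nonpos_of_le_sum_of_isLittleO_sq (hα : ∀ j, |α j| < 1) (hsum : ∑ j, α j ^ 2 = 1)
    {q : ℝ → ℝ} (hq0 : q 0 ≤ 0) (hq : ∀ t, q t ≤ ∑ j, q (α j * t))
    (hlo : q =o[𝓝 0] fun t => t ^ 2) (t : ℝ) : q t ≤ 0 := by
  rcases eq_or_ne t 0 with rfl | ht
  · exact hq0
  have hlim : Tendsto (fun s => q s / s ^ 2) (𝓝[≠] 0) (𝓝 0) :=
    hlo.tendsto_div_nhds_zero.mono_left nhdsWithin_le_nhds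
  have hratio : q t / t ^ 2 ≤ 0 :=
    ge_of_tendsto_of_frequently hlim (frequently_div_sq_le_div_sq_of_le_sum hα hsum hq0 hq ht)
  simpa using (div_le_iff₀ (by positivity)).1 hratio

end Descent

section SecondMoment

lemma tendsto_one_sub_cos_mul_div_sq (x : ℝ) :
    Tendsto (fun t => (1 - Real.cos (t * x)) / t ^ 2) (𝓝[≠] 0) (𝓝 (x ^ 2 / 2)) := by
  have hsinc : Tendsto (fun t => x ^ 2 / 2 * Real.sinc (t * x / 2) ^ 2) (𝓝[≠] 0)
      (𝓝 (x ^ 2 / 2)) := by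
    have hcont : Continuous fun t => x ^ 2 / 2 * Real.sinc (t * x / 2) ^ 2 := by fun_prop
    simpa using (hcont.tendsto 0).mono_left nhdsWithin_le_nhds
  refine hsinc.congr' (eventually_mem_nhdsWithin.mono fun t ht => ?_)
  replace ht : t ≠ 0 := ht
  rcases eq_or_ne x 0 with rfl | hx
  · simp
  have hcos : Real.cos (t * x) = 1 - 2 * Real.sin (t * x / 2) ^ 2 := by
    rw [Real.sin_sq_eq_half_sub, mul_div_cancel₀ _ (two_ne_zero' ℝ)]
    ring
  simp only [Real.sinc_of_ne_zero (show t * x / 2 ≠ 0 by positivity), hcos]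
  field_simp
  ring

lemma re_charFun_eq_integral_cos (μ : Measure ℝ) [IsFiniteMeasure μ] (t : ℝ) :
    (charFun μ t).re = ∫ x, Real.cos (t * x) ∂μ := by
  have hint : Integrable (fun x : ℝ => Complex.exp (t * x * Complex.I)) μ := by
    refine .of_bound (by fun_prop) 1 (ae_of_all _ fun x => ?_)
    rw [← Complex.ofReal_mul, Complex.norm_exp_ofReal_mul_I]
  rw [charFun_apply_real, ← RCLike.re_eq_complex_re, ← integral_re hint]
  refine integral_congr_ae (ae_of_all _ fun x => ?_)
  simp only [RCLike.re_eq_complex_re, ← Complex.ofReal_mul, Complex.exp_ofReal_mul_I_re]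

lemma lintegral_one_sub_cos_div_sq (μ : Measure ℝ) [IsProbabilityMeasure μ] (t : ℝ) :
    ∫⁻ x, ENNReal.ofReal ((1 - Real.cos (t * x)) / t ^ 2) ∂μ =
      ENNReal.ofReal ((1 - (charFun μ t).re) / t ^ 2) := by
  have hcos : Integrable (fun x : ℝ => Real.cos (t * x)) μ :=
    .of_bound (by fun_prop) 1 (ae_of_all _ fun x => Real.abs_cos_le_one _)
  have hint : Integrable (fun x : ℝ => (1 - Real.cos (t * x)) / t ^ 2) μ :=
    ((integrable_const 1).sub hcos).div_const _
  have hnonneg : 0 ≤ᵐ[μ] fun x : ℝ => (1 - Real.cos (t * x)) / t ^ 2 :=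
    ae_of_all _ fun x => div_nonneg (sub_nonneg.2 (Real.cos_le_one _)) (sq_nonneg t)
  rw [← ofReal_integral_eq_lintegral_ofReal hint hnonneg, integral_div,
    integral_sub (integrable_const _) hcos, integral_const, probReal_univ, one_smul,
    re_charFun_eq_integral_cos]

lemma memLp_two_of_frequently_re_charFun {μ : Measure ℝ} [IsProbabilityMeasure μ] {c : ℝ}
    (h : ∃ᶠ t in 𝓝[≠] (0 : ℝ), (1 - (charFun μ t).re) / t ^ 2 ≤ c) : MemLp id 2 μ := by
  obtain ⟨u, hu, hc⟩ := exists_seq_forall_of_frequently h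
  have hfatou : ∫⁻ x, ENNReal.ofReal (x ^ 2 / 2) ∂μ ≤ ENNReal.ofReal c := calc
    _ = ∫⁻ x, liminf (fun k => ENNReal.ofReal ((1 - Real.cos (u k * x)) / u k ^ 2)) atTop ∂μ :=
      lintegral_congr fun x => (ENNReal.tendsto_ofReal
        ((tendsto_one_sub_cos_mul_div_sq x).comp hu)).liminf_eq.symm
    _ ≤ liminf (fun k => ∫⁻ x, ENNReal.ofReal ((1 - Real.cos (u k * x)) / u k ^ 2) ∂μ) atTop :=
      lintegral_liminf_le fun k => by fun_prop
    _ ≤ ENNReal.ofReal c := by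
      refine liminf_le_of_frequently_le' (.of_forall fun k => ?_)
      rw [lintegral_one_sub_cos_div_sq]
      exact ENNReal.ofReal_le_ofReal (hc k)
  have hint : Integrable (fun x : ℝ => x ^ 2 / 2) μ := by
    refine ⟨by fun_prop, ?_⟩
    rw [hasFiniteIntegral_iff_ofReal (ae_of_all _ fun x => by positivity)]
    exact hfatou.trans_lt ENNReal.ofReal_lt_top
  rw [memLp_two_iff_integrable_sq aestronglyMeasurable_id]
  simpa using hint.mul_const 2

lemma memLp_id_of_memLp_id_conv {E : Type*} [NormedAddCommGroup E] [MeasurableSpace E]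
    [BorelSpace E] [SecondCountableTopology E] {μ ν : Measure E} [NeZero μ] [IsFiniteMeasure ν]
    {p : ENNReal} (hp0 : p ≠ 0) (hp : p ≠ ⊤) (h : MemLp id p (μ ∗ ν)) : MemLp id p ν := by
  have hint := (integrable_norm_rpow_iff aestronglyMeasurable_id hp0 hp).2 h
  obtain ⟨x, hx⟩ := ((integrable_conv_iff hint.aestronglyMeasurable).1 hint).1.exists
  have hadd : MemLp (fun y => x + y) p ν :=
    (integrable_norm_rpow_iff (by fun_prop) hp0 hp).1 hx
  exact (hadd.sub (memLp_const x)).ae_eq (ae_of_all _ fun y => add_sub_cancel_left x y)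

lemma charFun_map_neg_conv_self {E : Type*} [NormedAddCommGroup E] [InnerProductSpace ℝ E]
    [MeasurableSpace E] [BorelSpace E] [SecondCountableTopology E] (μ : Measure E)
    [IsFiniteMeasure μ] (t : E) :
    charFun (μ.map ((-1 : ℝ) • ·) ∗ μ) t = ((‖charFun μ t‖ ^ 2 : ℝ) : ℂ) := by
  rw [charFun_conv, charFun_map_smul, neg_one_smul, charFun_neg, mul_comm, Complex.mul_conj,
    Complex.normSq_eq_norm_sq]

lemma memLp_two_of_frequently_log_norm_charFun {μ : Measure ℝ} [IsProbabilityMeasure μ] {c : ℝ}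
    (hne : ∀ t, charFun μ t ≠ 0)
    (h : ∃ᶠ t in 𝓝[≠] (0 : ℝ), c ≤ Real.log ‖charFun μ t‖ / t ^ 2) : MemLp id 2 μ := by
  have : IsProbabilityMeasure (μ.map ((-1 : ℝ) • ·)) :=
    Measure.isProbabilityMeasure_map (by fun_prop)
  refine memLp_id_of_memLp_id_conv (μ := μ.map ((-1 : ℝ) • ·)) two_ne_zero (by simp) ?_
  refine memLp_two_of_frequently_re_charFun (c := -2 * c) (h.mono fun t ht => ?_)
  rw [charFun_map_neg_conv_self, Complex.ofReal_re]
  have hlog : 2 * Real.log ‖charFun μ t‖ ≤ ‖charFun μ t‖ ^ 2 - 1 := by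
    have hpos : 0 < ‖charFun μ t‖ := norm_pos_iff.2 (hne t)
    simpa using Real.log_le_sub_one_of_pos (pow_pos hpos 2)
  calc (1 - ‖charFun μ t‖ ^ 2) / t ^ 2 ≤ -2 * Real.log ‖charFun μ t‖ / t ^ 2 := by
        gcongr
        linarith
    _ = -2 * (Real.log ‖charFun μ t‖ / t ^ 2) := mul_div_assoc _ _ _
    _ ≤ -2 * c := by linarith

end SecondMoment

lemma charFun_sub_charFun_isLittleO_pow {μ ν : Measure ℝ} [IsFiniteMeasure μ] [IsFiniteMeasure ν]
    {n : ℕ} (hμ : MemLp id n μ) (hν : MemLp id n ν)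
    (hmoment : ∀ k ≤ n, ∫ x, x ^ k ∂μ = ∫ x, x ^ k ∂ν) :
    (fun t => charFun μ t - charFun ν t) =o[𝓝 0] fun t : ℝ => t ^ n := by
  have htaylor (t : ℝ) : taylorWithinEval (charFun μ) n Set.univ 0 t =
      taylorWithinEval (charFun ν) n Set.univ 0 t := by
    rw [taylorWithinEval_charFun_zero hμ, taylorWithinEval_charFun_zero hν]
    refine Finset.sum_congr rfl fun k hk => ?_
    rw [hmoment k (Finset.mem_range_succ_iff.1 hk)]
  have hμ' := taylor_isLittleO_univ (x₀ := 0) (contDiff_charFun hμ)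
  have hν' := taylor_isLittleO_univ (x₀ := 0) (contDiff_charFun hν)
  simpa [htaylor] using hμ'.sub hν'

lemma norm_prod_sub_prod_le_sum_norm_sub {ι R : Type*} [NormedCommRing R] [NormOneClass R]
    (s : Finset ι) {f g : ι → R} (hf : ∀ i ∈ s, ‖f i‖ ≤ 1) (hg : ∀ i ∈ s, ‖g i‖ ≤ 1) :
    ‖∏ i ∈ s, f i - ∏ i ∈ s, g i‖ ≤ ∑ i ∈ s, ‖f i - g i‖ := by
  induction s using Finset.cons_induction with
  | empty => simp
  | cons a s ha ih =>
    simp only [Finset.mem_cons, forall_eq_or_imp] at hf hg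
    have hprod : ‖∏ i ∈ s, f i‖ ≤ 1 :=
      (s.norm_prod_le f).trans (Finset.prod_le_one (fun i _ => norm_nonneg _) hf.2)
    rw [Finset.prod_cons, Finset.prod_cons, Finset.sum_cons]
    calc ‖f a * ∏ i ∈ s, f i - g a * ∏ i ∈ s, g i‖
        = ‖(f a - g a) * ∏ i ∈ s, f i + g a * (∏ i ∈ s, f i - ∏ i ∈ s, g i)‖ := by ring_nf
      _ ≤ ‖f a - g a‖ * ‖∏ i ∈ s, f i‖ + ‖g a‖ * ‖∏ i ∈ s, f i - ∏ i ∈ s, g i‖ :=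
        (norm_add_le _ _).trans (add_le_add (norm_mul_le _ _) (norm_mul_le _ _))
      _ ≤ ‖f a - g a‖ * 1 + 1 * ∑ i ∈ s, ‖f i - g i‖ := by
        gcongr
        exacts [hg.1, ih hf.2 hg.2]
      _ = ‖f a - g a‖ + ∑ i ∈ s, ‖f i - g i‖ := by ring

section WeightedSum

variable {ι : Type*} [Fintype ι]

/-- The law of `∑ⱼ αⱼ ξⱼ` for independent real random variables `ξⱼ` with laws `μ j`. Pólya's
theorem is about the fixed points of `μ ↦ weightedSumLaw α fun _ => μ`. -/
noncomputable def weightedSumLaw (α : ι → ℝ) (μ : ι → Measure ℝ) : Measure ℝ :=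
  (Measure.pi μ).map fun x => ∑ j, α j * x j

namespace weightedSumLaw

variable (α : ι → ℝ)

instance (μ : ι → Measure ℝ) [∀ j, IsProbabilityMeasure (μ j)] :
    IsProbabilityMeasure (weightedSumLaw α μ) :=
  Measure.isProbabilityMeasure_map (by fun_prop : Measurable _).aemeasurable

lemma charFun_eq_prod (μ : ι → Measure ℝ) [∀ j, IsProbabilityMeasure (μ j)] (t : ℝ) :
    charFun (weightedSumLaw α μ) t = ∏ j, charFun (μ j) (α j * t) := by
  have hindep : iIndepFun (fun j (x : ι → ℝ) => α j * x j) (Measure.pi μ) :=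
    iIndepFun_pi (X := fun j x => α j * x) fun j => by fun_prop
  rw [weightedSumLaw,
    hindep.charFun_map_fun_sum_eq_prod fun j => (by fun_prop : Measurable _).aemeasurable,
    Finset.prod_apply]
  refine Finset.prod_congr rfl fun j _ => ?_
  rw [charFun_map_mul_comp (measurable_pi_apply j).aemeasurable,
    (measurePreserving_eval μ j).map_eq]

lemma integral_eq_sum (μ : ι → Measure ℝ) [∀ j, IsProbabilityMeasure (μ j)]
    (hμ : ∀ j, Integrable id (μ j)) :
    ∫ x, x ∂(weightedSumLaw α μ) = ∑ j, α j * ∫ x, x ∂(μ j) := by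
  have hint (j : ι) : Integrable (fun x : ι → ℝ => α j * x j) (Measure.pi μ) :=
    (integrable_comp_eval (f := fun x => x) (hμ j)).const_mul _
  rw [weightedSumLaw, integral_map (by fun_prop : Measurable _).aemeasurable (by fun_prop),
    integral_finsetSum _ fun j _ => hint j]
  refine Finset.sum_congr rfl fun j _ => ?_
  have hproj : ∫ x : ι → ℝ, x j ∂Measure.pi μ = ∫ x, x ∂(μ j) :=
    integral_comp_eval (μ := μ) (i := j) (f := fun x => x) (hμ j).aestronglyMeasurable
  rw [integral_const_mul, hproj]

lemma gaussianReal_eq (m : ι → ℝ) (v : ι → ℝ≥0) :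
    weightedSumLaw α (fun j => gaussianReal (m j) (v j)) =
      gaussianReal (∑ j, α j * m j) (∑ j, ‖α j‖₊ ^ 2 * v j) := by
  refine Measure.ext_of_charFun (funext fun t => ?_)
  simp_rw [charFun_eq_prod, charFun_gaussianReal, ← Complex.exp_sum]
  congr 1
  push_cast
  simp only [Finset.sum_sub_distrib, Finset.mul_sum, Finset.sum_mul, Finset.sum_div]
  congr 1 <;> refine Finset.sum_congr rfl fun j _ => ?_
  · ring
  · have hsq : ((‖α j‖ : ℝ) : ℂ) ^ 2 = (α j : ℂ) ^ 2 := by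
      rw [← Complex.ofReal_pow, Real.norm_eq_abs, sq_abs, Complex.ofReal_pow]
    rw [hsq]
    ring

end weightedSumLaw

variable {α : ι → ℝ} {μ : Measure ℝ} [IsProbabilityMeasure μ]

lemma charFun_eq_prod_of_weightedSumLaw_eq (hμ : weightedSumLaw α (fun _ => μ) = μ) (t : ℝ) :
    charFun μ t = ∏ j, charFun μ (α j * t) := by
  conv_lhs => rw [← hμ]
  exact weightedSumLaw.charFun_eq_prod α _ t

lemma charFun_ne_zero_of_weightedSumLaw_eq (hα : ∀ j, |α j| < 1)
    (hμ : weightedSumLaw α (fun _ => μ) = μ) (t : ℝ) : charFun μ t ≠ 0 := by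
  have ne_zero_of_root {s : ℝ} (hs : charFun μ s = 0) : s ≠ 0 := by
    rintro rfl
    simp at hs
  intro ht
  have hroots : ∃ᶠ s in 𝓝[≠] (0 : ℝ), charFun μ s = 0 := by
    refine frequently_nhdsNE_zero_of_forall_exists_mul hα (fun s _ hs => ?_) (ne_zero_of_root ht) ht
    rw [charFun_eq_prod_of_weightedSumLaw_eq hμ, Finset.prod_eq_zero_iff] at hs
    obtain ⟨j, -, hj⟩ := hs
    exact ⟨j, ne_zero_of_root hj, hj⟩
  have hnear : ∀ᶠ s in 𝓝 (0 : ℝ), charFun μ s ≠ 0 :=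
    continuous_charFun.continuousAt.eventually_ne (by simp)
  exact hroots (hnear.filter_mono nhdsWithin_le_nhds)

lemma memLp_two_of_weightedSumLaw_eq (hα : ∀ j, |α j| < 1) (hsum : ∑ j, α j ^ 2 = 1)
    (hμ : weightedSumLaw α (fun _ => μ) = μ) : MemLp id 2 μ := by
  have hne := charFun_ne_zero_of_weightedSumLaw_eq hα hμ
  have hlog (t : ℝ) : Real.log ‖charFun μ t‖ = ∑ j, Real.log ‖charFun μ (α j * t)‖ := by
    rw [charFun_eq_prod_of_weightedSumLaw_eq hμ t, norm_prod,
      Real.log_prod fun j _ => norm_ne_zero_iff.2 (hne _)]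
  exact memLp_two_of_frequently_log_norm_charFun hne
    (frequently_div_sq_le_div_sq_of_le_sum (q := fun t => Real.log ‖charFun μ t‖) hα hsum
      (by simp) (fun t => (hlog t).le) one_ne_zero)

lemma eq_of_weightedSumLaw_eq_of_isLittleO {ν : Measure ℝ} [IsProbabilityMeasure ν]
    (hα : ∀ j, |α j| < 1) (hsum : ∑ j, α j ^ 2 = 1) (hμ : weightedSumLaw α (fun _ => μ) = μ)
    (hν : weightedSumLaw α (fun _ => ν) = ν)
    (hlo : (fun t => charFun μ t - charFun ν t) =o[𝓝 0] fun t : ℝ => t ^ 2) : μ = ν := by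
  have hq (t : ℝ) : ‖charFun μ t - charFun ν t‖ ≤
      ∑ j, ‖charFun μ (α j * t) - charFun ν (α j * t)‖ := by
    rw [charFun_eq_prod_of_weightedSumLaw_eq hμ t, charFun_eq_prod_of_weightedSumLaw_eq hν t]
    exact norm_prod_sub_prod_le_sum_norm_sub _ (fun j _ => norm_charFun_le_one _)
      fun j _ => norm_charFun_le_one _
  refine Measure.ext_of_charFun (funext fun t => sub_eq_zero.1 (norm_le_zero_iff.1 ?_))
  exact nonpos_of_le_sum_of_isLittleO_sq (q := fun t => ‖charFun μ t - charFun ν t‖) hα hsum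
    (by simp) hq hlo.norm_left t

lemma weightedSumLaw_gaussianReal_eq_self (hsum : ∑ j, α j ^ 2 = 1) {m : ℝ}
    (hm : ∑ j, α j * m = m) (v : ℝ≥0) :
    weightedSumLaw α (fun _ => gaussianReal m v) = gaussianReal m v := by
  have hsum' : ∑ j, ‖α j‖₊ ^ 2 = 1 := by
    ext
    simpa using hsum
  rw [weightedSumLaw.gaussianReal_eq, hm, ← Finset.sum_mul, hsum', one_mul]

end WeightedSum

lemma charFun_sub_charFun_gaussianReal_isLittleO {μ : Measure ℝ} [IsProbabilityMeasure μ]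
    (hμ : MemLp id 2 μ) :
    (fun t => charFun μ t - charFun (gaussianReal (∫ x, x ∂μ) (variance id μ).toNNReal) t)
      =o[𝓝 0] fun t : ℝ => t ^ 2 := by
  have hγ : MemLp id 2 (gaussianReal (∫ x, x ∂μ) (variance id μ).toNNReal) :=
    memLp_id_gaussianReal 2
  refine charFun_sub_charFun_isLittleO_pow hμ hγ fun k hk => ?_
  interval_cases k
  · simp
  · simp [integral_id_gaussianReal]
  · have hvarμ := variance_eq_sub hμ
    have hvarγ := variance_eq_sub hγ
    rw [variance_id_gaussianReal, Real.coe_toNNReal _ (variance_nonneg _ _)] at hvarγ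
    simp only [Pi.pow_apply, id, integral_id_gaussianReal] at hvarμ hvarγ
    linarith

theorem generalized_polya_real_general {ι : Type*} [Fintype ι] (α : ι → ℝ)
    (hα : ∀ j, |α j| < 1) (hsum : ∑ j, (α j) ^ 2 = 1)
    (μ : Measure ℝ) [IsProbabilityMeasure μ]
    (heq : Measure.map (fun x : ι → ℝ => ∑ j, α j * x j) (Measure.pi fun _ : ι => μ) = μ) :
    ∃ (m : ℝ) (v : ℝ≥0), μ = gaussianReal m v := by
  have hμ : weightedSumLaw α (fun _ => μ) = μ := heq
  have hL2 : MemLp id 2 μ := memLp_two_of_weightedSumLaw_eq hα hsum hμ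
  have hmean : ∑ j, α j * ∫ x, x ∂μ = ∫ x, x ∂μ := by
    rw [← weightedSumLaw.integral_eq_sum α (fun _ => μ) fun _ => hL2.integrable one_le_two, hμ]
  exact ⟨∫ x, x ∂μ, (variance id μ).toNNReal,
    eq_of_weightedSumLaw_eq_of_isLittleO hα hsum hμ
      (weightedSumLaw_gaussianReal_eq_self hsum hmean _)
      (charFun_sub_charFun_gaussianReal_isLittleO hL2)⟩

lemma abs_lt_one_of_sum_sq_eq_one {ι : Type*} [Fintype ι] [Nontrivial ι] {α : ι → ℝ}
    (hα0 : ∀ j, α j ≠ 0) (hsum : ∑ j, α j ^ 2 = 1) (j : ι) : |α j| < 1 := by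
  obtain ⟨i, hi⟩ := exists_ne j
  rw [← sq_lt_one_iff_abs_lt_one, ← hsum]
  exact Finset.single_lt_sum (f := fun j => α j ^ 2) hi (Finset.mem_univ j) (Finset.mem_univ i)
    (sq_pos_of_ne_zero (hα0 i)) fun k _ _ => sq_nonneg (α k)

/-- The generalized Pólya theorem on the real line (Theorem A): if `ξ₁, …, ξₙ` are i.i.d.
real random variables with distribution `μ`, the `αⱼ` are nonzero reals with
`α₁² + ⋯ + αₙ² = 1`, and `ξ₁` and `α₁ξ₁ + ⋯ + αₙξₙ` are identically distributed,
then `μ` is a (possibly degenerate) Gaussian distribution. -/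
theorem generalized_polya_real
    (n : ℕ) (hn : 2 ≤ n) (α : Fin n → ℝ) (hα0 : ∀ j, α j ≠ 0)
    (hsum : ∑ j, (α j) ^ 2 = 1)
    (μ : Measure ℝ) [IsProbabilityMeasure μ]
    (heq : Measure.map (fun x : Fin n → ℝ => ∑ j, α j * x j)
        (Measure.pi fun _ : Fin n => μ) = μ) :
    ∃ (m : ℝ) (v : ℝ≥0), μ = gaussianReal m v :=
  have : Nontrivial (Fin n) := Fin.nontrivial_iff_two_le.2 hn
  generalized_polya_real_general α (abs_lt_one_of_sum_sq_eq_one hα0 hsum) hsum μ heq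
end
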